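/- arXiv:1804.07213 — 2 statements merged into one kernel-verified Lean document; each statement's English description precedes it below -/
import Mathlib

section
/- Let F(x) = f(x) + P₁(x) − P₂(x) be level-bounded, and let {x^k} and {ξ^k} be the sequences generated by pDCA_e for minimizing F. Then for every k ≥ 1, E(x^{k+1}, ξ^{k+1}, x^k) ≤ E(x^k, ξ^k, x^{k−1}) − (L/2)(1 − β_k²)‖x^k − x^{k−1}‖². -/
/-!
Write `u = x^k + β_k (x^k - x^{k-1})`, `p = x^{k+1}` and `z = x^k`.  The argument chains four facts:

* the subproblem objective is `L`-strongly convex, so its minimality at `p` gives the extra term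
  `L/2 ‖z - p‖²` when compared with its value at `z` (`prox_three_point`);
* the Lipschitz gradient bounds `f p` by the quadratic model of `f` at `u` (`descent_quadratic`);
* convexity bounds the linear model of `f` at `u`, evaluated at `z`, by `f z`
  (`convex_gradient_ineq`);
* Fenchel's equality holds for the pair `(x^k, ξ^{k+1})`, since `ξ^{k+1} ∈ ∂P₂(x^k)`, and Fenchel's
  inequality for the pair `(x^k, ξ^k)`.

The first three give
`f p + P₁ p ≤ f z + P₁ z + ⟨ξ^{k+1}, p - z⟩ + L/2 ‖z - u‖² - L/2 ‖z - p‖²` with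
`‖z - u‖ = β_k ‖x^k - x^{k-1}‖`.  By the fourth, the potential at step `k + 1` is at most
`f z + P₁ z - P₂ z + L/2 β_k² ‖x^k - x^{k-1}‖²`, while at step `k` it is at least
`f z + P₁ z - P₂ z + L/2 ‖x^k - x^{k-1}‖²`.  All the extended-real quantities involved are finite:
`P₁` is finite at every iterate by minimality, and `P₂*` is finite at every subgradient of `P₂`.
-/

open Filter Topology Set Metric Bornology
open scoped RealInnerProductSpace

noncomputable section

abbrev Eucl (n : ℕ) := EuclideanSpace ℝ (Fin n)

variable {H : Type*} [NormedAddCommGroup H] [InnerProductSpace ℝ H]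

/-- Fréchet (regular) subgradient of an extended-real-valued function. -/
def FrechetSubgradAt (h : H → EReal) (v x : H) : Prop :=
  ∀ ε : ℝ, 0 < ε →
    ∀ᶠ y in 𝓝[≠] x, h x + ((⟪v, y - x⟫ - ε * ‖y - x‖ : ℝ) : EReal) ≤ h y

/-- Limiting (Mordukhovich) subdifferential. -/
def limSubdiff (h : H → EReal) (x : H) : Set H :=
  {v | ∃ xs vs : ℕ → H,
    Tendsto xs atTop (𝓝 x) ∧
    Tendsto (fun k => h (xs k)) atTop (𝓝 (h x)) ∧
    Tendsto vs atTop (𝓝 v) ∧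
    ∀ k, FrechetSubgradAt h (vs k) (xs k)}

/-- Convex subgradient of a real-valued function. -/
def ConvexSubgradAt (g : H → ℝ) (v x : H) : Prop :=
  ∀ y, g x + ⟪v, y - x⟫ ≤ g y

/-- Convex subgradient of an extended-real-valued function. -/
def ConvexSubgradAtE (g : H → EReal) (v x : H) : Prop :=
  ∀ y, g x + ((⟪v, y - x⟫ : ℝ) : EReal) ≤ g y

/-- Convex conjugate of a real-valued function. -/
def conjE (g : H → ℝ) (y : H) : EReal :=
  ⨆ x : H, ((⟪x, y⟫ - g x : ℝ) : EReal)

/-- `P` is proper, closed (lsc) and convex. -/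
def ProperClosedConvexE (P : H → EReal) : Prop :=
  (∀ x, P x ≠ ⊥) ∧ (∃ x, P x ≠ ⊤) ∧ LowerSemicontinuous P ∧
  (∀ x y : H, ∀ t : ℝ, t ∈ Ioo (0:ℝ) 1 →
    P (t • x + (1 - t) • y) ≤ (t : EReal) * P x + ((1 - t : ℝ) : EReal) * P y)

/-- KL property with exponent `α` at a point. -/
def KLExpAt (h : H → EReal) (α : ℝ) (x₀ : H) : Prop :=
  ∃ c > (0:ℝ), ∃ ε > (0:ℝ), ∃ a > (0:ℝ), ∀ x : H,
    ‖x - x₀‖ ≤ ε → h x₀ < h x → h x < h x₀ + (a : EReal) →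
    (limSubdiff h x).Nonempty →
    1 ≤ c * (1 - α) * ((h x).toReal - (h x₀).toReal) ^ (-α) * infDist 0 (limSubdiff h x)

/-- KL function with exponent `α`. -/
def IsKLWithExp (h : H → EReal) (α : ℝ) : Prop :=
  ∀ x₀ : H, (limSubdiff h x₀).Nonempty → KLExpAt h α x₀

/-- KL property (general desingularizing function) at a point. -/
def KLAt (h : H → EReal) (x₀ : H) : Prop :=
  ∃ a > (0:ℝ), ∃ U ∈ 𝓝 x₀, ∃ φ φd : ℝ → ℝ,
    ContinuousOn φ (Ico 0 a) ∧ ConcaveOn ℝ (Ico 0 a) φ ∧ φ 0 = 0 ∧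
    (∀ s ∈ Ico (0:ℝ) a, 0 ≤ φ s) ∧
    (∀ s ∈ Ioo (0:ℝ) a, HasDerivAt φ (φd s) s ∧ 0 < φd s) ∧
    ∀ x ∈ U, h x₀ < h x → h x < h x₀ + (a : EReal) → (limSubdiff h x).Nonempty →
      1 ≤ φd ((h x).toReal - (h x₀).toReal) * infDist 0 (limSubdiff h x)

/-- KL function. -/
def IsKLFun (h : H → EReal) : Prop :=
  ∀ x₀ : H, (limSubdiff h x₀).Nonempty → KLAt h x₀

/-- The potential function `E(x,y,w) = f(x) + P₁(x) - ⟨x,y⟩ + P₂*(y) + L/2 ‖x-w‖²`. -/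
def potE (f : H → ℝ) (P₁ : H → EReal) (P₂ : H → ℝ) (L : ℝ) (x y w : H) : EReal :=
  ((f x : ℝ) : EReal) + P₁ x - ((⟪x, y⟫ : ℝ) : EReal) + conjE P₂ y
    + ((L / 2 * ‖x - w‖ ^ 2 : ℝ) : EReal)

/-- The pDCAe iteration: `ξ^{k+1} ∈ ∂P₂(x^k)`, `u^k = x^k + β_k (x^k - x^{k-1})` and
`x^{k+1}` is the minimizer of `⟨∇f(u^k) - ξ^{k+1}, ·⟩ + L/2 ‖· - u^k‖² + P₁(·)`.
(`x⁻¹ = x⁰` is encoded by truncated subtraction in `ℕ`.) -/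
def IsPDCAe (f' : H → H) (P₁ : H → EReal) (P₂ : H → ℝ) (L : ℝ) (β : ℕ → ℝ)
    (x ξ : ℕ → H) : Prop :=
  P₁ (x 0) ≠ ⊤ ∧
  (∀ k : ℕ, ConvexSubgradAt P₂ (ξ (k + 1)) (x k)) ∧
  (∀ k : ℕ, ∀ z : H,
    ((⟪f' (x k + β k • (x k - x (k - 1))) - ξ (k + 1), x (k + 1)⟫
        + L / 2 * ‖x (k + 1) - (x k + β k • (x k - x (k - 1)))‖ ^ 2 : ℝ) : EReal)
      + P₁ (x (k + 1))
      ≤ ((⟪f' (x k + β k • (x k - x (k - 1))) - ξ (k + 1), z⟫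
        + L / 2 * ‖z - (x k + β k • (x k - x (k - 1)))‖ ^ 2 : ℝ) : EReal) + P₁ z)

/-- Triples `(x, y, w)` with the ℓ² product inner product structure. -/
abbrev Trip (n : ℕ) := WithLp 2 (Eucl n × WithLp 2 (Eucl n × Eucl n))

def mkTrip {n : ℕ} (a b c : Eucl n) : Trip n :=
  (WithLp.equiv 2 _).symm (a, (WithLp.equiv 2 _).symm (b, c))

/-- `potE` as a function on triples. -/
def potE3 {n : ℕ} (f : Eucl n → ℝ) (P₁ : Eucl n → EReal) (P₂ : Eucl n → ℝ) (L : ℝ)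
    (p : Trip n) : EReal :=
  potE f P₁ P₂ L ((WithLp.equiv 2 _) p).1 ((WithLp.equiv 2 _) ((WithLp.equiv 2 _) p).2).1
    ((WithLp.equiv 2 _) ((WithLp.equiv 2 _) p).2).2

/-! ### Smooth convex functions -/

lemma hasDerivAt_along_line [CompleteSpace H] {f : H → ℝ} {f' : H → H}
    (hf : ∀ y, HasGradientAt f (f' y) y) (u d : H) (t : ℝ) :
    HasDerivAt (fun s : ℝ => f (u + s • d)) ⟪f' (u + t • d), d⟫ t := by
  have h1 : HasDerivAt (fun s : ℝ => u + s • d) d t := by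
    simpa using ((hasDerivAt_id t).smul_const d).const_add u
  have h2 := (hf (u + t • d)).hasFDerivAt.comp_hasDerivAt t h1
  rw [InnerProductSpace.toDual_apply_apply] at h2
  exact h2

lemma convex_gradient_ineq [CompleteSpace H] {f : H → ℝ} {f' : H → H}
    (hc : ConvexOn ℝ Set.univ f) (hf : ∀ y, HasGradientAt f (f' y) y) (u z : H) :
    f u + ⟪f' u, z - u⟫ ≤ f z := by
  have hcl : ConvexOn ℝ Set.univ (fun s : ℝ => f (u + s • (z - u))) := by
    have := hc.comp_affineMap (AffineMap.lineMap u z : ℝ →ᵃ[ℝ] H)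
    simpa [Function.comp_def, AffineMap.lineMap_apply, add_comm] using this
  have h := hcl.le_slope_of_hasDerivAt (mem_univ 0) (mem_univ 1) zero_lt_one
    (hasDerivAt_along_line hf u (z - u) 0)
  simp [slope_def_field] at h
  linarith

/-- The descent lemma: along the segment from `u` to `p`, the difference between `f` and its
quadratic upper model has nonpositive derivative. -/
lemma descent_quadratic [CompleteSpace H] {f : H → ℝ} {f' : H → H} {L : ℝ}
    (hf : ∀ y, HasGradientAt f (f' y) y)
    (hlip : ∀ y z, ‖f' y - f' z‖ ≤ L * ‖y - z‖) (u p : H) :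
    f p ≤ f u + ⟪f' u, p - u⟫ + L / 2 * ‖p - u‖ ^ 2 := by
  set d := p - u with hd
  have hder : ∀ t : ℝ, HasDerivAt
      (fun s : ℝ => f (u + s • d) - s * ⟪f' u, d⟫ - L / 2 * ‖d‖ ^ 2 * s ^ 2)
      (⟪f' (u + t • d), d⟫ - ⟪f' u, d⟫ - L * ‖d‖ ^ 2 * t) t := by
    intro t
    have h2 := (hasDerivAt_id t).mul_const ⟪f' u, d⟫
    have h3 := (hasDerivAt_pow 2 t).const_mul (L / 2 * ‖d‖ ^ 2)
    refine (((hasDerivAt_along_line hf u d t).sub h2).sub h3).congr_deriv ?_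
    push_cast
    ring
  have hanti := antitoneOn_of_deriv_nonpos (convex_Icc (0 : ℝ) 1)
    (fun t _ => (hder t).continuousAt.continuousWithinAt)
    (fun t _ => (hder t).differentiableAt.differentiableWithinAt)
    (fun t ht => by
      rw [interior_Icc] at ht
      rw [(hder t).deriv, ← inner_sub_left]
      have h1 := real_inner_le_norm (f' (u + t • d) - f' u) d
      have h2 := hlip (u + t • d) u
      rw [add_sub_cancel_left, norm_smul, Real.norm_eq_abs, abs_of_pos ht.1] at h2
      nlinarith [mul_le_mul_of_nonneg_right h2 (norm_nonneg d)])
  have h := hanti (left_mem_Icc.2 zero_le_one) (right_mem_Icc.2 zero_le_one) zero_le_one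
  simp [hd] at h
  rw [hd]
  linarith

/-! ### The proximal subproblem -/

lemma norm_sq_convex_comb (z p u : H) (t : ℝ) :
    ‖t • z + (1 - t) • p - u‖ ^ 2
      = t * ‖z - u‖ ^ 2 + (1 - t) * ‖p - u‖ ^ 2 - t * (1 - t) * ‖z - p‖ ^ 2 := by
  have h1 : t • z + (1 - t) • p - u = t • (z - u) + (1 - t) • (p - u) := by module
  have h2 : z - p = (z - u) - (p - u) := by abel
  rw [h1, h2, norm_add_sq_real, norm_sub_sq_real (z - u)]
  simp only [norm_smul, inner_smul_left, inner_smul_right, mul_pow, Real.norm_eq_abs, sq_abs,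
    conj_trivial]
  ring

/-- Strong convexity of the proximal subproblem: comparing the minimizer `p` with the points
`t z + (1 - t) p` and letting `t → 0` yields the additional term `L/2 ‖z - p‖²`. -/
lemma prox_three_point {P : H → EReal} (hP : ProperClosedConvexE P) {L : ℝ} (hL : 0 < L)
    {g u p z : H} {a b : ℝ} (ha : P p = a) (hb : P z = b)
    (hmin : ∀ w : H, ((⟪g, p⟫ + L / 2 * ‖p - u‖ ^ 2 : ℝ) : EReal) + P p
      ≤ ((⟪g, w⟫ + L / 2 * ‖w - u‖ ^ 2 : ℝ) : EReal) + P w) :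
    ⟪g, p⟫ + L / 2 * ‖p - u‖ ^ 2 + a + L / 2 * ‖z - p‖ ^ 2
      ≤ ⟪g, z⟫ + L / 2 * ‖z - u‖ ^ 2 + b := by
  set c := L / 2 * ‖z - p‖ ^ 2 with hc
  set D := ⟪g, z⟫ + L / 2 * ‖z - u‖ ^ 2 + b - (⟪g, p⟫ + L / 2 * ‖p - u‖ ^ 2 + a) with hD
  have key : ∀ t ∈ Ioo (0 : ℝ) 1, c * (1 - t) ≤ D := by
    intro t ht
    have h1 := (hmin (t • z + (1 - t) • p)).trans
      (add_le_add_right (hP.2.2.2 z p t ht) _)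
    rw [ha, hb] at h1
    have h2 : ⟪g, p⟫ + L / 2 * ‖p - u‖ ^ 2 + a
        ≤ ⟪g, t • z + (1 - t) • p⟫ + L / 2 * ‖t • z + (1 - t) • p - u‖ ^ 2
          + (t * b + (1 - t) * a) := by exact_mod_cast h1
    rw [norm_sq_convex_comb, inner_add_right, inner_smul_right, inner_smul_right] at h2
    refine le_of_mul_le_mul_left ?_ ht.1
    rw [hc, hD]
    linarith
  have hc0 : 0 ≤ c := by positivity
  have hcD : c ≤ D := by
    have hhalf := key (1 / 2) (by norm_num)
    by_contra! hlt
    have hcpos : 0 < c := by linarith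
    -- For this `t`, `c * (1 - t)` is the midpoint of `c` and `D`.
    have h3 := key ((c - D) / (2 * c))
      ⟨div_pos (by linarith) (by linarith), by rw [div_lt_one (by linarith)]; linarith⟩
    have h4 : c * (1 - (c - D) / (2 * c)) = (c + D) / 2 := by field_simp; ring
    linarith
  linarith

lemma IsPDCAe.P₁_ne_top {f' : H → H} {P₁ : H → EReal} {P₂ : H → ℝ} {L : ℝ} {β : ℕ → ℝ}
    {x ξ : ℕ → H} (h : IsPDCAe f' P₁ P₂ L β x ξ) (k : ℕ) : P₁ (x k) ≠ ⊤ := by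
  cases k with
  | zero => exact h.1
  | succ k =>
    intro htop
    have h1 := h.2.2 k (x 0)
    rw [htop, EReal.coe_add_top, top_le_iff] at h1
    exact EReal.add_ne_top (EReal.coe_ne_top _) h.1 h1

/-! ### The conjugate -/

/-- Fenchel's equality at a subgradient. -/
lemma conjE_eq_of_subgrad {g : H → ℝ} {v y : H} (h : ConvexSubgradAt g v y) :
    conjE g v = ((⟪y, v⟫ - g y : ℝ) : EReal) := by
  refine le_antisymm (iSup_le fun w => ?_)
    (le_iSup (fun w : H => ((⟪w, v⟫ - g w : ℝ) : EReal)) y)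
  have h1 := h w
  rw [inner_sub_right, real_inner_comm, real_inner_comm y v] at h1
  exact_mod_cast (by linarith : ⟪w, v⟫ - g w ≤ ⟪y, v⟫ - g y)

/-! ### Descent of the potential -/

/-- Proposition 1(i): sufficient descent of the potential function `E` along pDCAe. -/
theorem pDCAe_potE_descent
    {n : ℕ} (f : Eucl n → ℝ) (f' : Eucl n → Eucl n) (P₁ : Eucl n → EReal)
    (P₂ : Eucl n → ℝ) (L : ℝ) (β : ℕ → ℝ) (x ξ : ℕ → Eucl n)
    (hL : 0 < L)
    (hfconv : ConvexOn ℝ Set.univ f)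
    (hfgrad : ∀ y, HasGradientAt f (f' y) y)
    (hflip : ∀ y z, ‖f' y - f' z‖ ≤ L * ‖y - z‖)
    (hP₁ : ProperClosedConvexE P₁)
    (hP₂cont : Continuous P₂)
    (hP₂conv : ConvexOn ℝ Set.univ P₂)
    (hβ : ∀ k, β k ∈ Set.Ico (0:ℝ) 1)
    (hβsup : ∃ B < (1:ℝ), ∀ k, β k ≤ B)
    (hlevel : ∀ γ : ℝ, IsBounded {y : Eucl n |
      ((f y : ℝ) : EReal) + P₁ y - ((P₂ y : ℝ) : EReal) ≤ (γ : EReal)})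
    (hseq : IsPDCAe f' P₁ P₂ L β x ξ)
    : ∀ k : ℕ, 1 ≤ k →
      potE f P₁ P₂ L (x (k + 1)) (ξ (k + 1)) (x k)
        ≤ potE f P₁ P₂ L (x k) (ξ k) (x (k - 1))
          - ((L / 2 * (1 - β k ^ 2) * ‖x k - x (k - 1)‖ ^ 2 : ℝ) : EReal) := by
  intro k hk
  obtain ⟨j, rfl⟩ : ∃ j, k = j + 1 := ⟨k - 1, by omega⟩
  have hfin : ∀ i, ∃ a : ℝ, P₁ (x i) = a := fun i =>
    ⟨_, (EReal.coe_toReal (hseq.P₁_ne_top i) (hP₁.1 _)).symm⟩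
  obtain ⟨a, ha⟩ := hfin (j + 1 + 1)
  obtain ⟨b, hb⟩ := hfin (j + 1)
  have hsub := hseq.2.1
  have h3 := prox_three_point hP₁ hL ha hb (hseq.2.2 (j + 1))
  simp only [potE, conjE_eq_of_subgrad (hsub (j + 1)), conjE_eq_of_subgrad (hsub j), ha, hb,
    Nat.add_sub_cancel] at h3 ⊢
  have hu : ‖x (j + 1) - (x (j + 1) + β (j + 1) • (x (j + 1) - x j))‖ ^ 2
      = β (j + 1) ^ 2 * ‖x (j + 1) - x j‖ ^ 2 := by
    rw [sub_add_cancel_left, norm_neg, norm_smul, mul_pow, Real.norm_eq_abs, sq_abs]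
  rw [hu, norm_sub_rev (x (j + 1)) (x (j + 1 + 1))] at h3
  set u := x (j + 1) + β (j + 1) • (x (j + 1) - x j)
  have h1 := descent_quadratic hfgrad hflip u (x (j + 1 + 1))
  have h2 := convex_gradient_ineq hfconv hfgrad u (x (j + 1))
  -- With `P₂*(ξ^k)` evaluated at `x^{k-1}`, this is Fenchel's inequality for `(x^k, ξ^k)`.
  have h4 := hsub j (x (j + 1))
  rw [inner_sub_right] at h1 h2 h4
  rw [inner_sub_left, inner_sub_left] at h3
  rw [real_inner_comm (x (j + 1)), real_inner_comm (x j)] at h4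
  rw [real_inner_comm (x (j + 1 + 1)) (ξ _), real_inner_comm (x (j + 1)) (ξ _)] at h3
  norm_cast
  linarith
end
end

section
/- Let F(x) = f(x) + P₁(x) − P₂(x) be level-bounded, and let {x^k} and {ξ^k} be the sequences generated by pDCA_e for minimizing F. Then the sequences {x^k} and {ξ^k} are bounded; consequently, the set Υ of accumulation points of the sequence {(x^k, ξ^k, x^{k−1})} is a nonempty compact subset of ℝⁿ × ℝⁿ × ℝⁿ. -/
/-!
The quantity `F(xᵏ) + L/2 ‖xᵏ - xᵏ⁻¹‖²` is nonincreasing along the iteration. The subproblem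
defining `xᵏ⁺¹` is `L`-strongly convex, so comparing its minimizer with `xᵏ` gains the term
`L/2 ‖xᵏ⁺¹ - xᵏ‖²` (`prox_three_point`). Combining this with the descent lemma for `f`
(`descent_lemma`), the gradient inequality for `f` at `uᵏ` (`gradient_inequality`) and the
subgradient inequality for `P₂` at `xᵏ` gives
`F(xᵏ⁺¹) + L/2 ‖xᵏ⁺¹ - xᵏ‖² ≤ F(xᵏ) + L/2 β_k² ‖xᵏ - xᵏ⁻¹‖²` (`pdcae_step`).
As `β_k ≤ 1` and `x⁻¹ = x⁰`, all iterates lie in the sublevel set `{F ≤ F(x⁰)}`, which is bounded.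

Subgradients of the continuous function `P₂` at points of a bounded set are bounded
(`subgrad_bounded`), hence so is `{ξᵏ}`. The triples then stay in a compact set, which yields a
cluster point; the cluster set is closed and contained in that compact set.
-/

open Filter Topology Set Metric Bornology
open scoped RealInnerProductSpace

noncomputable section

variable {H : Type*} [NormedAddCommGroup H] [InnerProductSpace ℝ H]

lemma hasDerivAt_line {n : ℕ} {f : Eucl n → ℝ} {f' : Eucl n → Eucl n}
    (hfgrad : ∀ y, HasGradientAt f (f' y) y) (u d : Eucl n) (t : ℝ) :
    HasDerivAt (fun s : ℝ => f (u + s • d)) ⟪f' (u + t • d), d⟫ t := by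
  have h1 : HasDerivAt (fun s : ℝ => u + s • d) d t := by
    simpa using ((hasDerivAt_id t).smul_const d).const_add u
  have h2 := (hfgrad (u + t • d)).hasFDerivAt
  have h3 := h2.comp_hasDerivAt t h1
  simp only [InnerProductSpace.toDual_apply_apply] at h3
  exact h3

/-- The gradient inequality for convex functions, obtained from the one-dimensional slope
inequality on the segment from `u` to `y`. -/
lemma gradient_inequality {n : ℕ} {f : Eucl n → ℝ} {f' : Eucl n → Eucl n}
    (hfconv : ConvexOn ℝ Set.univ f) (hfgrad : ∀ y, HasGradientAt f (f' y) y) (u y : Eucl n) :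
    f u + ⟪f' u, y - u⟫ ≤ f y := by
  have hc : ConvexOn ℝ Set.univ (fun s : ℝ => f (u + s • (y - u))) := by
    refine ⟨convex_univ, fun a _ b _ p q hp hq hpq => ?_⟩
    have h := hfconv.2 (mem_univ (u + a • (y - u))) (mem_univ (u + b • (y - u))) hp hq hpq
    convert h using 2
    have hu : u = (p + q) • u := by rw [hpq, one_smul]
    nth_rewrite 1 [hu]
    simp only [smul_eq_mul]
    module
  have h := hc.le_slope_of_hasDerivAt (mem_univ (0 : ℝ)) (mem_univ (1 : ℝ)) one_pos
    (hasDerivAt_line hfgrad u (y - u) 0)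
  simp [slope_def_field] at h
  linarith

/-- The descent lemma: an `L`-Lipschitz gradient gives a quadratic upper bound. Along the segment,
the difference of the two sides has a nonpositive derivative. -/
lemma descent_lemma {n : ℕ} {f : Eucl n → ℝ} {f' : Eucl n → Eucl n} {L : ℝ}
    (hfgrad : ∀ y, HasGradientAt f (f' y) y)
    (hflip : ∀ y z, ‖f' y - f' z‖ ≤ L * ‖y - z‖) (u y : Eucl n) :
    f y ≤ f u + ⟪f' u, y - u⟫ + L / 2 * ‖y - u‖ ^ 2 := by
  set d := y - u with hd
  let φ : ℝ → ℝ := fun s => f (u + s • d) - s * ⟪f' u, d⟫ - s ^ 2 * (L / 2 * ‖d‖ ^ 2)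
  have hφ : ∀ t, HasDerivAt φ
      (⟪f' (u + t • d), d⟫ - ⟪f' u, d⟫ - 2 * t * (L / 2 * ‖d‖ ^ 2)) t := by
    intro t
    have h1 := ((hasDerivAt_id t).mul_const ⟪f' u, d⟫)
    have h2 := ((hasDerivAt_pow 2 t).mul_const (L / 2 * ‖d‖ ^ 2))
    have h3 := ((hasDerivAt_line hfgrad u d t).sub h1).sub h2
    refine h3.congr_deriv ?_
    simp
  have hanti : AntitoneOn φ (Icc 0 1) := by
    refine antitoneOn_of_deriv_nonpos (convex_Icc 0 1)
      (fun t _ => (hφ t).continuousAt.continuousWithinAt)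
      (fun t _ => (hφ t).differentiableAt.differentiableWithinAt) ?_
    intro t ht
    rw [interior_Icc] at ht
    rw [(hφ t).deriv, ← inner_sub_left]
    have h1 := real_inner_le_norm (f' (u + t • d) - f' u) d
    have h2 := hflip (u + t • d) u
    rw [add_sub_cancel_left, norm_smul, Real.norm_of_nonneg ht.1.le] at h2
    have h3 := mul_le_mul_of_nonneg_right h2 (norm_nonneg d)
    nlinarith
  have h := hanti (left_mem_Icc.2 zero_le_one) (right_mem_Icc.2 zero_le_one) zero_le_one
  have hy : u + (1 : ℝ) • d = y := by simp [hd]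
  simp only [φ, hy] at h
  simp at h
  linarith

/-- Quadratic growth of the proximal subproblem at its minimizer `a`: comparing `a` with the points
`t z + (1 - t) a` and letting `t → 0` gains the term `L/2 ‖z - a‖²`. -/
lemma prox_three_point_s1 {n : ℕ} {P₁ : Eucl n → EReal} (hP₁ : ProperClosedConvexE P₁) {L : ℝ}
    {c u a z : Eucl n} {pa pz : ℝ} (ha : P₁ a = pa) (hz : P₁ z = pz)
    (hmin : ∀ y, ((⟪c, a⟫ + L / 2 * ‖a - u‖ ^ 2 : ℝ) : EReal) + P₁ a
      ≤ ((⟪c, y⟫ + L / 2 * ‖y - u‖ ^ 2 : ℝ) : EReal) + P₁ y) :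
    ⟪c, a⟫ + L / 2 * ‖a - u‖ ^ 2 + pa + L / 2 * ‖z - a‖ ^ 2
      ≤ ⟪c, z⟫ + L / 2 * ‖z - u‖ ^ 2 + pz := by
  have key : ∀ t ∈ Ioo (0 : ℝ) 1,
      ⟪c, a⟫ + L / 2 * ‖a - u‖ ^ 2 + pa + (1 - t) * (L / 2 * ‖z - a‖ ^ 2)
        ≤ ⟪c, z⟫ + L / 2 * ‖z - u‖ ^ 2 + pz := by
    intro t ht
    have h1 := hP₁.2.2.2 z a t ht
    have h2 := (hmin (t • z + (1 - t) • a)).trans (add_le_add le_rfl h1)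
    rw [ha, hz] at h2
    norm_cast at h2
    have h3 : ‖t • z + (1 - t) • a - u‖ ^ 2
        = t * ‖z - u‖ ^ 2 + (1 - t) * ‖a - u‖ ^ 2 - t * (1 - t) * ‖z - a‖ ^ 2 := by
      have e1 : t • z + (1 - t) • a - u = t • (z - u) + (1 - t) • (a - u) := by module
      have e2 : z - a = (z - u) - (a - u) := by abel
      rw [e1, e2, norm_add_sq_real, norm_sub_sq_real (z - u) (a - u), norm_smul, norm_smul, mul_pow, mul_pow,
        inner_smul_left, inner_smul_right, Real.norm_eq_abs, Real.norm_eq_abs, sq_abs, sq_abs]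
      simp only [conj_trivial]
      ring
    rw [h3, inner_add_right, inner_smul_right, inner_smul_right] at h2
    refine le_of_mul_le_mul_left ?_ ht.1
    nlinarith
  have hlim : Tendsto (fun t : ℝ => ⟪c, a⟫ + L / 2 * ‖a - u‖ ^ 2 + pa
      + (1 - t) * (L / 2 * ‖z - a‖ ^ 2)) (𝓝[>] 0)
      (𝓝 (⟪c, a⟫ + L / 2 * ‖a - u‖ ^ 2 + pa + L / 2 * ‖z - a‖ ^ 2)) := by
    refine tendsto_nhdsWithin_of_tendsto_nhds ?_
    refine Continuous.tendsto' (by fun_prop) _ _ (by ring)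
  exact le_of_tendsto hlim (Filter.mem_of_superset (Ioo_mem_nhdsGT one_pos) key)

/-- One step of the iteration: `w`, `a`, `b` stand for `xᵏ⁻¹`, `xᵏ`, `xᵏ⁺¹`, and `v` for `ξᵏ⁺¹`. -/
lemma pdcae_step {n : ℕ} {f : Eucl n → ℝ} {f' : Eucl n → Eucl n} {P₁ : Eucl n → EReal}
    {P₂ : Eucl n → ℝ} {L β : ℝ} {w a b v : Eucl n} {pa pb : ℝ}
    (hfconv : ConvexOn ℝ Set.univ f) (hfgrad : ∀ y, HasGradientAt f (f' y) y)
    (hflip : ∀ y z, ‖f' y - f' z‖ ≤ L * ‖y - z‖) (hP₁ : ProperClosedConvexE P₁)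
    (hv : ConvexSubgradAt P₂ v a) (ha : P₁ a = pa) (hb : P₁ b = pb)
    (hmin : ∀ z, ((⟪f' (a + β • (a - w)) - v, b⟫
        + L / 2 * ‖b - (a + β • (a - w))‖ ^ 2 : ℝ) : EReal) + P₁ b
      ≤ ((⟪f' (a + β • (a - w)) - v, z⟫
        + L / 2 * ‖z - (a + β • (a - w))‖ ^ 2 : ℝ) : EReal) + P₁ z) :
    f b + pb - P₂ b + L / 2 * ‖b - a‖ ^ 2
      ≤ f a + pa - P₂ a + L / 2 * (β ^ 2 * ‖a - w‖ ^ 2) := by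
  have h1 := prox_three_point_s1 hP₁ hb ha hmin
  have hau : ‖a - (a + β • (a - w))‖ ^ 2 = β ^ 2 * ‖a - w‖ ^ 2 := by
    rw [sub_add_cancel_left, norm_neg, norm_smul, mul_pow, Real.norm_eq_abs, sq_abs]
  rw [hau, norm_sub_rev a b] at h1
  set u := a + β • (a - w)
  have h2 := gradient_inequality hfconv hfgrad u a
  have h3 := descent_lemma hfgrad hflip u b
  have h4 := hv b
  simp only [inner_sub_left, inner_sub_right] at h1 h2 h3 h4
  linarith

/-- Subgradients of a continuous function at the points of a bounded set are uniformly bounded: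
`P₂` is bounded on a closed ball, and moving a unit step along a subgradient `v` raises `P₂` by at
least `‖v‖`. -/
lemma subgrad_bounded {n : ℕ} {P₂ : Eucl n → ℝ} (hP₂ : Continuous P₂) {s : Set (Eucl n)}
    (hs : IsBounded s) :
    ∃ C : ℝ, ∀ a ∈ s, ∀ v, ConvexSubgradAt P₂ v a → ‖v‖ ≤ C := by
  obtain ⟨R, hR⟩ := hs.exists_norm_le
  obtain ⟨M, hM⟩ := (isCompact_closedBall (0 : Eucl n) (R + 1)).exists_bound_of_continuousOn
    hP₂.continuousOn
  refine ⟨2 * M, fun a ha v hv => ?_⟩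
  have haR := hR a ha
  have h0 := hM a (by rw [mem_closedBall_zero_iff]; linarith)
  rw [Real.norm_eq_abs] at h0
  have h0' := abs_le.1 h0
  rcases eq_or_ne v 0 with rfl | hv0
  · rw [norm_zero]
    linarith [abs_nonneg (P₂ a)]
  · have hn : ‖v‖ ≠ 0 := norm_ne_zero_iff.2 hv0
    have h1 := hM (a + ‖v‖⁻¹ • v) (by
      rw [mem_closedBall_zero_iff]
      refine (norm_add_le _ _).trans ?_
      rw [norm_smul, norm_inv, norm_norm, inv_mul_cancel₀ hn]
      linarith)
    rw [Real.norm_eq_abs] at h1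
    have h1' := abs_le.1 h1
    have h2 := hv (a + ‖v‖⁻¹ • v)
    rw [add_sub_cancel_left, inner_smul_right, real_inner_self_eq_norm_sq, sq, ← mul_assoc,
      inv_mul_cancel₀ hn, one_mul] at h2
    linarith [h1'.2, h0'.1]

lemma continuous_mkTrip {n : ℕ} :
    Continuous (fun q : Eucl n × Eucl n × Eucl n => mkTrip q.1 q.2.1 q.2.2) :=
  (WithLp.prod_continuous_toLp 2 _ _).comp
    (continuous_fst.prodMk ((WithLp.prod_continuous_toLp 2 _ _).comp continuous_snd))

/-- Proposition 1(ii): boundedness of the pDCAe sequences and compactness of the set of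
accumulation points of `{(xᵏ, ξᵏ, xᵏ⁻¹)}`. -/
theorem pDCAe_bounded_accumulation
    {n : ℕ} (f : Eucl n → ℝ) (f' : Eucl n → Eucl n) (P₁ : Eucl n → EReal)
    (P₂ : Eucl n → ℝ) (L : ℝ) (β : ℕ → ℝ) (x ξ : ℕ → Eucl n)
    (hL : 0 < L)
    (hfconv : ConvexOn ℝ Set.univ f)
    (hfgrad : ∀ y, HasGradientAt f (f' y) y)
    (hflip : ∀ y z, ‖f' y - f' z‖ ≤ L * ‖y - z‖)
    (hP₁ : ProperClosedConvexE P₁)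
    (hP₂cont : Continuous P₂)
    (hP₂conv : ConvexOn ℝ Set.univ P₂)
    (hβ : ∀ k, β k ∈ Set.Ico (0:ℝ) 1)
    (hβsup : ∃ B < (1:ℝ), ∀ k, β k ≤ B)
    (hlevel : ∀ γ : ℝ, IsBounded {y : Eucl n |
      ((f y : ℝ) : EReal) + P₁ y - ((P₂ y : ℝ) : EReal) ≤ (γ : EReal)})
    (hseq : IsPDCAe f' P₁ P₂ L β x ξ)
    : IsBounded (Set.range x) ∧ IsBounded (Set.range ξ) ∧
      {p : Trip n |
        MapClusterPt p atTop (fun k : ℕ => mkTrip (x (k + 1)) (ξ (k + 1)) (x k))}.Nonempty ∧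
      IsCompact {p : Trip n |
        MapClusterPt p atTop (fun k : ℕ => mkTrip (x (k + 1)) (ξ (k + 1)) (x k))} := by
  obtain ⟨hx0, hsub, hmin⟩ := hseq
  -- Every iterate lies in the domain of `P₁`: compare the minimizer with `x⁰`.
  have hfin : ∀ k, P₁ (x k) ≠ ⊤ := by
    intro k
    cases k with
    | zero => exact hx0
    | succ k =>
      intro htop
      have h := hmin k (x 0)
      rw [htop, EReal.coe_add_top, top_le_iff] at h
      exact (EReal.add_ne_top (EReal.coe_ne_top _) hx0) h
  have hp : ∀ k, P₁ (x k) = ((P₁ (x k)).toReal : EReal) := fun k =>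
    (EReal.coe_toReal (hfin k) (hP₁.1 _)).symm
  have hdesc : ∀ k, f (x k) + (P₁ (x k)).toReal - P₂ (x k) + L / 2 * ‖x k - x (k - 1)‖ ^ 2
      ≤ f (x 0) + (P₁ (x 0)).toReal - P₂ (x 0) := by
    intro k
    induction k with
    | zero => simp
    | succ k ih =>
      have h := pdcae_step hfconv hfgrad hflip hP₁ (hsub k) (hp k) (hp (k + 1)) (hmin k)
      have hβ2 : β k ^ 2 ≤ 1 := pow_le_one₀ (hβ k).1 (hβ k).2.le
      have h2 : β k ^ 2 * ‖x k - x (k - 1)‖ ^ 2 ≤ ‖x k - x (k - 1)‖ ^ 2 :=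
        mul_le_of_le_one_left (sq_nonneg _) hβ2
      have h3 := mul_le_mul_of_nonneg_left h2 (half_pos hL).le
      rw [Nat.add_sub_cancel]
      linarith
  have hxb : IsBounded (Set.range x) := by
    refine (hlevel (f (x 0) + (P₁ (x 0)).toReal - P₂ (x 0))).subset ?_
    rintro _ ⟨k, rfl⟩
    have h := hdesc k
    have h' : 0 ≤ L / 2 * ‖x k - x (k - 1)‖ ^ 2 := by positivity
    rw [Set.mem_ofPred_eq, hp k]
    exact_mod_cast (by linarith : f (x k) + (P₁ (x k)).toReal - P₂ (x k)
      ≤ f (x 0) + (P₁ (x 0)).toReal - P₂ (x 0))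
  have hξb : IsBounded (Set.range ξ) := by
    obtain ⟨C, hC⟩ := subgrad_bounded hP₂cont hxb
    -- The iteration does not constrain `ξ 0`, hence the maximum.
    refine isBounded_iff_forall_norm_le.2 ⟨max C ‖ξ 0‖, ?_⟩
    rintro _ ⟨k, rfl⟩
    cases k with
    | zero => exact le_max_right _ _
    | succ k => exact (hC _ (mem_range_self k) _ (hsub k)).trans (le_max_left _ _)
  have hK := ((hxb.isCompact_closure.prod
    (hξb.isCompact_closure.prod hxb.isCompact_closure)).image continuous_mkTrip)
  have hmem : ∀ k, mkTrip (x (k + 1)) (ξ (k + 1)) (x k) ∈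
      (fun q : Eucl n × Eucl n × Eucl n => mkTrip q.1 q.2.1 q.2.2) ''
        (closure (Set.range x) ×ˢ closure (Set.range ξ) ×ˢ closure (Set.range x)) := fun k =>
    ⟨(x (k + 1), ξ (k + 1), x k), ⟨subset_closure (mem_range_self _),
      subset_closure (mem_range_self _), subset_closure (mem_range_self _)⟩, rfl⟩
  refine ⟨hxb, hξb, ?_, ?_⟩
  · obtain ⟨p, -, hpc⟩ := hK.exists_mapClusterPt (f := atTop)
      (u := fun k : ℕ => mkTrip (x (k + 1)) (ξ (k + 1)) (x k))
      (tendsto_principal.2 (Eventually.of_forall hmem))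
    exact ⟨p, hpc⟩
  · refine hK.of_isClosed_subset isClosed_setOfPred_clusterPt fun p hpc => ?_
    exact hK.isClosed.mem_of_mapClusterPt hpc (Eventually.of_forall hmem)
end
end
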